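/- A subshift (X, T) is a minimal substitution dynamical system (i.e., X = X_σ for some substitution σ and (X_σ, T) is minimal) if and only if X = X_τ for some substitution τ that is l-primitive and tame. -/

import Mathlib

/-!
Throughout, `σ` is non-erasing, so the lengths `|σⁿ(a)|` increase with `n`, and a letter is short
exactly when these lengths are bounded.

An `l`-primitive tame substitution has a minimal system. Tameness bounds the runs of short letters
in the words `σⁿ(a)` (`exists_run_bound`). The first long letters of `σⁿ(a)`, `n = 0, 1, …`, reach a
letter `c` such that some `σ^q(c)` has `c` as its first long letter; as `c` is not left isolated,
`σ^q(c)` begins with `c`, and then no `σᵐ(c)` begins with a short letter. This bounds the leading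
runs, reversal of words bounds the trailing ones, and an inner run is contained in some `σⁿ(b)` with
smaller `n`, or is a trailing run followed by boundedly many leading ones. Now a long factor `w` of
a point of `X_σ` lies in some `σⁿ(a)` with `a` long, hence by `l`-primitivity in `σᵗ(b)` for one `t`
and all long `b`. Every long enough factor of a point of `X_σ` contains the image under `σᵗ` of a
word longer than any run of short letters, hence some such `σᵗ(b)`, hence `w`
(`recurrent_of_tame`).

Conversely, let `X_σ` be minimal. For `G ⊆ A_l` consider the set of long letters in the words
`σⁿ(a)`, `a ∈ G`. A minimal nonempty set `F` of long letters fixed by one of these maps satisfies,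
for a suitable `N` and every `a ∈ F`, that the long letters of `σᴺ(a)` are exactly those of `F`
(`exists_primitive_power`). Hence `σᴺ` restricts to an `l`-primitive substitution `τ` on
`F ∪ A_s`, and `X_τ` is a nonempty subsystem of `X_σ`, so equal to it. If `τ` is tame, this is the
required substitution. Otherwise some `τⁿ(a)` is `u a w` (or `w a u`) with `u ≠ ε` short, and since
`τ` has a power that is idempotent on short words, the words `τⁿ(a)` contain arbitrarily high powers
of a single word `v` (`powers_of_leftIsolated`). Then `X_σ` is the orbit of `v^∞`, and it is the
system of the substitution `b ↦ v v` on the letters of `v` (`exists_of_powers`).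
-/

namespace SubstMin

variable {A : Type*}

/-- Apply a map `σ : A → A⁺` to a word by concatenation. -/
def substW (σ : A → List A) (w : List A) : List A := w.flatMap σ

/-- `n`-th iterate of the substitution applied to a word. -/
def substIter (σ : A → List A) (n : ℕ) (w : List A) : List A := (substW σ)^[n] w

/-- The set `A_l` of letters `a` with `|σⁿ(a)| → ∞`. -/
def longLetters (σ : A → List A) : Set A :=
  {a | Filter.Tendsto (fun n => (substIter σ n [a]).length) Filter.atTop Filter.atTop}

/-- The set `A_s = A \ A_l`. -/
def shortLetters (σ : A → List A) : Set A := (longLetters σ)ᶜ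

/-- `σ` is a substitution: letters map to nonempty words and `A_l ≠ ∅`. -/
def IsSubstitution (σ : A → List A) : Prop :=
  (∀ a, σ a ≠ []) ∧ (longLetters σ).Nonempty

/-- The language `L(σ)`: factors of some `σⁿ(a)`, `n ≥ 1`. -/
def lang (σ : A → List A) : Set (List A) :=
  {w | ∃ (a : A) (n : ℕ), 1 ≤ n ∧ w <:+: substIter σ n [a]}

/-- The finite factor `x[s,t]` of a bi-infinite sequence. -/
def factorOf (x : ℤ → A) (s t : ℤ) : List A :=
  (List.range (t - s + 1).toNat).map fun i => x (s + (i : ℤ))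

/-- The substitution dynamical system `X_σ`. -/
def XSub (σ : A → List A) : Set (ℤ → A) :=
  {x | ∀ s t : ℤ, s ≤ t → factorOf x s t ∈ lang σ}

/-- The left shift `T`. -/
def shiftT (x : ℤ → A) : ℤ → A := fun i => x (i + 1)

/-- A subshift is minimal if it is nonempty and has no nonempty proper closed
shift-invariant subset. -/
def IsMinimalSubshift [TopologicalSpace A] (X : Set (ℤ → A)) : Prop :=
  X.Nonempty ∧ ∀ Y : Set (ℤ → A), Y ⊆ X → Y.Nonempty → IsClosed Y →
    shiftT '' Y = Y → Y = X

/-- `a ∈ A_l` is left isolated: `σⁿ(a) = u a w` with `u ∈ A_s⁺`, `w ∈ A*`. -/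
def LeftIsolated (σ : A → List A) (a : A) : Prop :=
  ∃ n : ℕ, 1 ≤ n ∧ ∃ u w : List A, u ≠ [] ∧ (∀ b ∈ u, b ∈ shortLetters σ) ∧
    substIter σ n [a] = u ++ a :: w

/-- `a ∈ A_l` is right isolated: `σᵐ(a) = w a u` with `u ∈ A_s⁺`, `w ∈ A*`. -/
def RightIsolated (σ : A → List A) (a : A) : Prop :=
  ∃ n : ℕ, 1 ≤ n ∧ ∃ u w : List A, u ≠ [] ∧ (∀ b ∈ u, b ∈ shortLetters σ) ∧
    substIter σ n [a] = w ++ a :: u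

/-- `σ` is tame: no letter of `A_l` is left or right isolated. -/
def Tame (σ : A → List A) : Prop :=
  ∀ a ∈ longLetters σ, ¬ LeftIsolated σ a ∧ ¬ RightIsolated σ a

/-- `σ` is `l`-primitive. -/
def LPrimitive (σ : A → List A) : Prop :=
  ∃ n : ℕ, 1 ≤ n ∧ ∀ a ∈ longLetters σ, ∀ b ∈ longLetters σ, a ∈ substIter σ n [b]

/-- `a → b` : `b` occurs in `σⁿ(a)` for some `n ≥ 1`. -/
def arrow (σ : A → List A) (a b : A) : Prop :=
  ∃ n : ℕ, 1 ≤ n ∧ b ∈ substIter σ n [a]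

/-- `A_{∘,l} = {a ∈ A_l | a → a}`. -/
def circLong (σ : A → List A) : Set A := {a | a ∈ longLetters σ ∧ arrow σ a a}

/-- `A_{min,l}`: letters of `A_l` minimal in `A_l`. -/
def minLong (σ : A → List A) : Set A :=
  {a | a ∈ longLetters σ ∧ ∀ b ∈ longLetters σ, arrow σ a b → arrow σ b a}

/-- `x` is a periodic point of the shift. -/
def IsPeriodicPoint (x : ℤ → A) : Prop := ∃ p : ℕ, 1 ≤ p ∧ shiftT^[p] x = x

/-- `X` is a single periodic orbit. -/
def IsSinglePeriodicOrbit (X : Set (ℤ → A)) : Prop :=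
  ∃ x : ℤ → A, IsPeriodicPoint x ∧ X = Set.range fun i : ℤ => fun j => x (j + i)

/-- `y = σ(x)` : `y` is obtained from `x` by applying `σ` to each coordinate and
concatenating, with `σ(x(0))` placed starting at coordinate `0`. -/
def IsSubstImage (σ : A → List A) (x y : ℤ → A) : Prop :=
  ∃ o : ℤ → ℤ, o 0 = 0 ∧ (∀ i : ℤ, o (i + 1) = o i + (σ (x i)).length) ∧
    ∀ i : ℤ, factorOf y (o i) (o (i + 1) - 1) = σ (x i)

/-- The map `s` on nonempty subsets of `A_l`: `s(F) = ⋃_{a ∈ F} (Lett(σ(a)) ∩ A_l)`. -/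
def sMap (σ : A → List A) (F : Set A) : Set A :=
  {b | b ∈ longLetters σ ∧ ∃ a ∈ F, b ∈ σ a}

end SubstMin

namespace SubstMin

/-! ### Iterates of a substitution on words -/

section Words

variable {A : Type*} {σ : A → List A}

theorem substIter_succ (n : ℕ) (w : List A) :
    substIter σ (n + 1) w = substIter σ n (substW σ w) := rfl

theorem substIter_add (m n : ℕ) (w : List A) :
    substIter σ (m + n) w = substIter σ m (substIter σ n w) :=
  Function.iterate_add_apply _ _ _ _

theorem substIter_append (n : ℕ) (u v : List A) :
    substIter σ n (u ++ v) = substIter σ n u ++ substIter σ n v := by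
  induction n generalizing u v with
  | zero => rfl
  | succ n ih => simp [substIter_succ, substW, ih]

theorem substIter_nil (n : ℕ) : substIter σ n [] = [] := by
  induction n with
  | zero => rfl
  | succ n ih => simpa [substIter_succ, substW] using ih

theorem substIter_cons (n : ℕ) (a : A) (w : List A) :
    substIter σ n (a :: w) = substIter σ n [a] ++ substIter σ n w :=
  substIter_append n [a] w

theorem substIter_eq_flatMap (n : ℕ) (w : List A) :
    substIter σ n w = w.flatMap fun a => substIter σ n [a] := by
  induction w with
  | nil => simp [substIter_nil]
  | cons a w ih => rw [substIter_cons, ih, List.flatMap_cons]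

theorem mem_substIter {n : ℕ} {w : List A} {b : A} :
    b ∈ substIter σ n w ↔ ∃ a ∈ w, b ∈ substIter σ n [a] := by
  rw [substIter_eq_flatMap, List.mem_flatMap]

theorem substIter_pow (N n : ℕ) (w : List A) :
    substIter (fun a => substIter σ N [a]) n w = substIter σ (N * n) w := by
  induction n generalizing w with
  | zero => rfl
  | succ n ih =>
    rw [substIter_succ, ih, Nat.mul_succ, substIter_add, substW, ← substIter_eq_flatMap]

theorem substIter_infix {u w : List A} (n : ℕ) (h : u <:+: w) :
    substIter σ n u <:+: substIter σ n w := by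
  obtain ⟨s, t, rfl⟩ := h
  rw [substIter_append, substIter_append]
  exact ⟨_, _, rfl⟩

theorem substIter_reverse (n : ℕ) (w : List A) :
    substIter (fun a => (σ a).reverse) n w.reverse = (substIter σ n w).reverse := by
  induction n generalizing w with
  | zero => rfl
  | succ n ih =>
    have : substW (fun a => (σ a).reverse) w.reverse = (substW σ w).reverse := by
      simp [substW, List.reverse_flatMap, Function.comp_def]
    rw [substIter_succ, substIter_succ, this, ih]

theorem substIter_reverse_singleton (n : ℕ) (a : A) :
    substIter (fun a => (σ a).reverse) n [a] = (substIter σ n [a]).reverse :=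
  substIter_reverse n [a]

theorem length_le_length_substIter (hσ : ∀ a, σ a ≠ []) (n : ℕ) (w : List A) :
    w.length ≤ (substIter σ n w).length := by
  induction n generalizing w with
  | zero => exact le_rfl
  | succ n ih =>
    refine le_trans ?_ (ih _)
    induction w with
    | nil => simp
    | cons a w ihw =>
      have := List.length_pos_iff.2 (hσ a)
      simp only [substW, List.flatMap_cons, List.length_append, List.length_cons] at ihw ⊢
      omega

theorem length_substIter_mono (hσ : ∀ a, σ a ≠ []) (w : List A) :
    Monotone fun n => (substIter σ n w).length := by
  intro m n h
  obtain ⟨k, rfl⟩ := Nat.exists_eq_add_of_le' h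
  simp only [substIter_add]
  exact length_le_length_substIter hσ _ _

theorem substIter_ne_nil (hσ : ∀ a, σ a ≠ []) (n : ℕ) {w : List A} (hw : w ≠ []) :
    substIter σ n w ≠ [] := by
  have := length_le_length_substIter hσ n w
  have := List.length_pos_iff.2 hw
  exact List.length_pos_iff.1 (by omega)

/-- For a non-erasing map the lengths `|σⁿ(a)|` increase, so a letter is short exactly when they
are bounded. -/
theorem mem_shortLetters_iff (hσ : ∀ a, σ a ≠ []) {a : A} :
    a ∈ shortLetters σ ↔ ∃ C, ∀ n, (substIter σ n [a]).length ≤ C := by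
  have hm := length_substIter_mono hσ [a]
  constructor
  · intro h
    by_contra! hc
    exact h (Filter.tendsto_atTop_atTop_of_monotone hm fun b => (hc b).imp fun _ h => h.le)
  · rintro ⟨C, hC⟩ h
    obtain ⟨n, hn⟩ := (Filter.tendsto_atTop.1 h (C + 1)).exists
    have := hC n
    omega

theorem not_mem_shortLetters {a : A} : a ∉ shortLetters σ ↔ a ∈ longLetters σ := by
  simp [shortLetters]

theorem exists_bound_of_short (hσ : ∀ a, σ a ≠ []) {u : List A}
    (hu : ∀ b ∈ u, b ∈ shortLetters σ) : ∃ C, ∀ n, (substIter σ n u).length ≤ C := by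
  induction u with
  | nil => exact ⟨0, fun n => by simp [substIter_nil]⟩
  | cons a u ih =>
    obtain ⟨C, hC⟩ := ih fun b hb => hu b (List.mem_cons_of_mem _ hb)
    obtain ⟨D, hD⟩ := (mem_shortLetters_iff hσ).1 (hu a List.mem_cons_self)
    refine ⟨D + C, fun n => ?_⟩
    rw [substIter_cons, List.length_append]
    exact add_le_add (hD n) (hC n)

theorem short_of_mem_substIter (hσ : ∀ a, σ a ≠ []) {u : List A}
    (hu : ∀ b ∈ u, b ∈ shortLetters σ) (n : ℕ) : ∀ b ∈ substIter σ n u, b ∈ shortLetters σ := by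
  intro b hb
  obtain ⟨C, hC⟩ := exists_bound_of_short hσ hu
  refine (mem_shortLetters_iff hσ).2 ⟨C, fun m => ?_⟩
  have h := substIter_infix (σ := σ) m ((List.singleton_infix_iff _ _).2 hb)
  rw [← substIter_add] at h
  exact h.length_le.trans (hC _)

theorem exists_long_of_long (hσ : ∀ a, σ a ≠ []) {a : A} (ha : a ∈ longLetters σ) (n : ℕ) :
    ∃ b ∈ substIter σ n [a], b ∈ longLetters σ := by
  by_contra! hc
  obtain ⟨C, hC⟩ := exists_bound_of_short hσ (u := substIter σ n [a]) hc
  refine (mem_shortLetters_iff hσ).2 ⟨C, fun m => ?_⟩ ha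
  refine (length_substIter_mono hσ [a] (Nat.le_add_right m n)).trans ?_
  simpa only [substIter_add] using hC m

theorem longLetters_congr {B : Type*} {τ : B → List B} {a : A} {b : B}
    (h : ∀ n, (substIter τ n [b]).length = (substIter σ n [a]).length) :
    b ∈ longLetters τ ↔ a ∈ longLetters σ := by
  simp only [longLetters, Set.mem_ofPred_eq, h]

theorem longLetters_reverse : longLetters (fun a => (σ a).reverse) = longLetters σ := by
  ext a
  exact longLetters_congr fun n => by rw [substIter_reverse_singleton, List.length_reverse]

theorem shortLetters_reverse : shortLetters (fun a => (σ a).reverse) = shortLetters σ := by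
  rw [shortLetters, longLetters_reverse, shortLetters]

theorem longLetters_pow (hσ : ∀ a, σ a ≠ []) {N : ℕ} (hN : 1 ≤ N) :
    longLetters (fun a => substIter σ N [a]) = longLetters σ := by
  rw [← compl_inj_iff]
  ext a
  change a ∈ shortLetters _ ↔ a ∈ shortLetters _
  rw [mem_shortLetters_iff hσ, mem_shortLetters_iff fun a => substIter_ne_nil hσ N (by simp)]
  simp only [substIter_pow]
  refine exists_congr fun C => ⟨fun h n => ?_, fun h n => h _⟩
  exact (length_substIter_mono hσ [a] (Nat.le_mul_of_pos_left n hN)).trans (h n)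

theorem rightIsolated_reverse {a : A} (h : RightIsolated σ a) :
    LeftIsolated (fun a => (σ a).reverse) a := by
  obtain ⟨n, hn, u, w, hu, hs, e⟩ := h
  refine ⟨n, hn, u.reverse, w.reverse, by simpa using hu, ?_, ?_⟩
  · rw [shortLetters_reverse]; simpa using hs
  · rw [substIter_reverse_singleton, e]; simp

theorem leftIsolated_reverse {a : A} (h : LeftIsolated σ a) :
    RightIsolated (fun a => (σ a).reverse) a := by
  obtain ⟨n, hn, u, w, hu, hs, e⟩ := h
  refine ⟨n, hn, u.reverse, w.reverse, by simpa using hu, ?_, ?_⟩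
  · rw [shortLetters_reverse]; simpa using hs
  · rw [substIter_reverse_singleton, e]; simp

theorem tame_reverse (h : Tame σ) : Tame fun a => (σ a).reverse := by
  intro a ha
  rw [longLetters_reverse] at ha
  refine ⟨fun hl => (h a ha).2 ?_, fun hl => (h a ha).1 ?_⟩
  · simpa using leftIsolated_reverse hl
  · simpa using rightIsolated_reverse hl

theorem lang_infix {u w : List A} (h : u <:+: w) (hw : w ∈ lang σ) : u ∈ lang σ := by
  obtain ⟨a, n, hn, hi⟩ := hw
  exact ⟨a, n, hn, h.trans hi⟩

end Words

/-! ### Runs of short letters in tame substitutions -/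

section Runs

variable {A : Type*} {σ : A → List A}

theorem exists_bound_of_finite [Finite A] (f : A → ℕ) : ∃ M, ∀ a, f a ≤ M := by
  obtain ⟨M, hM⟩ := (Set.finite_range f).bddAbove
  exact ⟨M, fun a => hM ⟨a, rfl⟩⟩

theorem exists_first_long {w : List A} (h : ∃ b ∈ w, b ∈ longLetters σ) :
    ∃ u c v, w = u ++ c :: v ∧ (∀ b ∈ u, b ∈ shortLetters σ) ∧ c ∈ longLetters σ := by
  induction w with
  | nil => simp at h
  | cons a w ih =>
    by_cases ha : a ∈ longLetters σ
    · exact ⟨[], a, w, rfl, by simp, ha⟩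
    · have : ∃ b ∈ w, b ∈ longLetters σ := by
        obtain ⟨b, hb, hl⟩ := h
        rcases List.mem_cons.1 hb with rfl | hb
        · exact absurd hl ha
        · exact ⟨b, hb, hl⟩
      obtain ⟨u, c, v, rfl, hu, hc⟩ := ih this
      exact ⟨a :: u, c, v, rfl, by simpa using ⟨ha, hu⟩, hc⟩

theorem first_long_unique {u u' v v' : List A} {c c' : A} (hu : ∀ b ∈ u, b ∈ shortLetters σ)
    (hu' : ∀ b ∈ u', b ∈ shortLetters σ) (hc : c ∈ longLetters σ) (hc' : c' ∈ longLetters σ)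
    (h : u ++ c :: v = u' ++ c' :: v') : u = u' ∧ c = c' := by
  induction u generalizing u' with
  | nil =>
    cases u' with
    | nil => simp at h; exact ⟨rfl, h.1⟩
    | cons d u' =>
      simp only [List.nil_append, List.cons_append, List.cons.injEq] at h
      exact absurd (h.1 ▸ hc) (hu' d List.mem_cons_self)
  | cons d u ih =>
    cases u' with
    | nil =>
      simp only [List.nil_append, List.cons_append, List.cons.injEq] at h
      exact absurd (h.1 ▸ hc') (hu d List.mem_cons_self)
    | cons d' u' =>
      simp only [List.cons_append, List.cons.injEq] at h
      obtain ⟨rfl, rfl⟩ := ih (fun b hb => hu b (List.mem_cons_of_mem _ hb))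
        (fun b hb => hu' b (List.mem_cons_of_mem _ hb)) h.2
      exact ⟨by rw [h.1], rfl⟩

/-- If a long letter `c` begins some `σ^q(c)` with `q ≥ 1`, then no iterate `σᵐ(c)` begins with a
short letter: otherwise `σ^(qm)(c)` would begin with a short letter too, but it begins with `c`. -/
theorem short_prefix_eq_nil (hσ : ∀ a, σ a ≠ []) {c : A} (hc : c ∈ longLetters σ) {q : ℕ}
    (hq : 1 ≤ q) {w : List A} (h : substIter σ q [c] = c :: w) {m : ℕ} {u v : List A}
    (hu : ∀ b ∈ u, b ∈ shortLetters σ) (e : substIter σ m [c] = u ++ v) : u = [] := by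
  have hk : ∀ k, ∃ w, substIter σ (q * k) [c] = c :: w := by
    intro k
    induction k with
    | zero => exact ⟨[], rfl⟩
    | succ k ih =>
      obtain ⟨w', hw'⟩ := ih
      rw [Nat.mul_succ, substIter_add, h, substIter_cons, hw']
      exact ⟨_, rfl⟩
  obtain ⟨w', hw'⟩ := hk m
  obtain ⟨k, hk⟩ := Nat.exists_eq_add_of_le' (Nat.le_mul_of_pos_left m hq)
  rw [hk, substIter_add, e, substIter_append] at hw'
  by_contra hne
  have hne' := substIter_ne_nil hσ k hne
  obtain ⟨x, l, hx⟩ := List.exists_cons_of_ne_nil hne'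
  have hs := short_of_mem_substIter hσ hu k x (by rw [hx]; exact List.mem_cons_self)
  rw [hx, List.cons_append, List.cons.injEq] at hw'
  exact hs (hw'.1 ▸ hc)

/-- Without left isolated letters, the leading run of short letters in `σⁿ(a)` has bounded length:
the first long letters of the words `σⁿ(a)` reach a letter `c` that recurs, and `σᵐ(c)` then has no
leading short letter for any `m`. -/
theorem exists_prefix_bound [Finite A] (hσ : ∀ a, σ a ≠ []) (ht : Tame σ) (a : A) :
    ∃ P, ∀ n u, u <+: substIter σ n [a] → (∀ b ∈ u, b ∈ shortLetters σ) → u.length ≤ P := by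
  by_cases ha : a ∈ longLetters σ
  swap
  · obtain ⟨C, hC⟩ := (mem_shortLetters_iff hσ).1 ha
    exact ⟨C, fun n u hu _ => hu.length_le.trans (hC n)⟩
  choose u c v e hu hc using fun n => exists_first_long (exists_long_of_long hσ ha n)
  obtain ⟨i, j, hij, hcij⟩ : ∃ i j, i < j ∧ c i = c j := by
    obtain ⟨i, j, hne, h⟩ := Finite.exists_ne_map_eq_of_infinite c
    rcases lt_or_gt_of_ne hne with h' | h'
    · exact ⟨i, j, h', h⟩
    · exact ⟨j, i, h', h.symm⟩
  obtain ⟨q, rfl⟩ := Nat.exists_eq_add_of_le' hij.le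
  have hq : 1 ≤ q := by omega
  obtain ⟨w, hw⟩ : ∃ w, substIter σ q [c i] = c i :: w := by
    obtain ⟨u', d, v', e', hu', hd⟩ := exists_first_long (exists_long_of_long hσ (hc i) q)
    have h1 := e (q + i)
    rw [substIter_add, e i, substIter_append, substIter_cons, e', ← List.append_assoc,
      ← List.append_assoc, List.append_assoc, List.cons_append] at h1
    obtain ⟨-, h2⟩ := first_long_unique (fun b hb => by
      rcases List.mem_append.1 hb with hb | hb
      · exact short_of_mem_substIter hσ (hu i) q b hb
      · exact hu' b hb) (hu _) hd (hc _) h1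
    obtain rfl : d = c i := h2.trans hcij.symm
    by_cases h0 : u' = []
    · subst h0; exact ⟨v', e'⟩
    · exact absurd ⟨q, hq, u', v', h0, hu', e'⟩ (ht _ (hc i)).1
  obtain ⟨C, hC⟩ := exists_bound_of_short hσ (hu i)
  refine ⟨(substIter σ i [a]).length + C, fun n z hz hs => ?_⟩
  rcases le_total n i with hn | hn
  · have h1 := hz.length_le
    have h2 := length_substIter_mono hσ [a] hn
    simp only at h2
    omega
  obtain ⟨k, rfl⟩ := Nat.exists_eq_add_of_le' hn
  rw [substIter_add, e i, substIter_append, substIter_cons] at hz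
  obtain ⟨t, hz⟩ := hz
  rcases List.append_eq_append_iff.1 hz with ⟨l, h1, -⟩ | ⟨l, rfl, h2⟩
  · have := hC k
    rw [h1, List.length_append] at this
    omega
  · have hl : ∀ b ∈ l, b ∈ shortLetters σ := fun b hb => hs b (List.mem_append_right _ hb)
    have : l = [] := by
      cases l with
      | nil => rfl
      | cons x l =>
        exfalso
        obtain ⟨y, l', hy⟩ := List.exists_cons_of_ne_nil
          (substIter_ne_nil hσ k (List.cons_ne_nil (c i) []))
        have h3 : y = x := by
          rw [hy] at h2; simpa using (List.cons.inj h2).1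
        have := short_prefix_eq_nil hσ (hc i) hq hw (u := [y]) (v := l')
          (by simpa [h3] using hl x List.mem_cons_self) (by rw [hy]; rfl)
        simp at this
    subst this
    have := hC k
    rw [List.append_nil]
    omega

theorem exists_suffix_bound [Finite A] (hσ : ∀ a, σ a ≠ []) (ht : Tame σ) (a : A) :
    ∃ P, ∀ n u, u <:+ substIter σ n [a] → (∀ b ∈ u, b ∈ shortLetters σ) → u.length ≤ P := by
  obtain ⟨P, hP⟩ := exists_prefix_bound (σ := fun a => (σ a).reverse)
    (fun a => by simpa using hσ a) (tame_reverse ht) a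
  refine ⟨P, fun n u hu hs => ?_⟩
  rw [← List.length_reverse]
  refine hP n _ ?_ ?_
  · rw [substIter_reverse_singleton]; exact List.reverse_prefix.2 hu
  · rw [shortLetters_reverse]; simpa using hs

theorem length_prefix_flatMap_le {g : A → List A} {p : A → Prop} {P : ℕ}
    (hP : ∀ a u, u <+: g a → (∀ b ∈ u, p b) → u.length ≤ P) (w : List A) {u : List A}
    (hu : u <+: w.flatMap g) (hp : ∀ b ∈ u, p b) : u.length ≤ w.length * P := by
  induction w generalizing u with
  | nil => simp at hu; simp [hu]
  | cons a w ih =>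
    rw [List.flatMap_cons] at hu
    obtain ⟨t, e⟩ := hu
    rw [List.length_cons, Nat.succ_mul]
    rcases List.append_eq_append_iff.1 e with ⟨l, h1, -⟩ | ⟨l, rfl, h2⟩
    · have := hP a u ⟨l, h1.symm⟩ hp
      omega
    · have h3 := hP a (g a) (List.prefix_refl _) fun b hb => hp b (List.mem_append_left _ hb)
      have h4 := ih ⟨t, h2.symm⟩ fun b hb => hp b (List.mem_append_right _ hb)
      rw [List.length_append]
      omega

/-- In a tame substitution the runs of short letters in all words `σⁿ(a)` have bounded length. -/
theorem exists_run_bound [Finite A] (hσ : ∀ a, σ a ≠ []) (ht : Tame σ) :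
    ∃ R, ∀ a n u, u <:+: substIter σ n [a] → (∀ b ∈ u, b ∈ shortLetters σ) → u.length ≤ R := by
  choose P hP using exists_prefix_bound hσ ht
  choose S hS using exists_suffix_bound hσ ht
  obtain ⟨P', hP'⟩ := exists_bound_of_finite P
  obtain ⟨S', hS'⟩ := exists_bound_of_finite S
  obtain ⟨M, hM⟩ := exists_bound_of_finite fun a => (σ a).length
  refine ⟨S' + M * P' + 1, fun a n => ?_⟩
  induction n generalizing a with
  | zero =>
    intro u hu _
    have := hu.length_le
    simp only [substIter, Function.iterate_zero, id, List.length_singleton] at this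
    omega
  | succ n ih =>
    intro u hu hs
    have key : ∀ w : List A, w.length ≤ M → ∀ u, u <:+: w.flatMap (fun a => substIter σ n [a]) →
        (∀ b ∈ u, b ∈ shortLetters σ) → u.length ≤ S' + M * P' + 1 := by
      intro w
      induction w with
      | nil => intro _ u hu _; simp at hu; simp [hu]
      | cons b w ihw =>
        intro hw u hu hs
        rw [List.length_cons] at hw
        rw [List.flatMap_cons, List.infix_append_iff] at hu
        rcases hu with hu | hu | ⟨x, y, rfl, hx, hy⟩
        · exact ih b u hu hs
        · exact ihw (by omega) u hu hs
        · have h1 := (hS b n x hx fun b hb => hs b (List.mem_append_left _ hb)).trans (hS' b)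
          have h2 := length_prefix_flatMap_le (p := (· ∈ shortLetters σ))
            (fun a u h h' => (hP a n u h h').trans (hP' a)) w hy
            fun b hb => hs b (List.mem_append_right _ hb)
          have h3 : w.length * P' ≤ M * P' := Nat.mul_le_mul_right _ (by omega)
          rw [List.length_append]
          omega
    rw [substIter_succ, substIter_eq_flatMap] at hu
    refine key _ ?_ u hu hs
    simpa [substW] using hM a

end Runs

/-! ### Factors of bi-infinite sequences, compactness, minimality -/

section Factors

variable {A : Type*} {σ : A → List A}

/-- The list mapped over in `factorOf` is the list of naturals `0, …, t - s` cast entrywise to `ℤ`;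
here the cast is moved into the mapped function. -/
theorem factorOf_eq (x : ℤ → A) (s t : ℤ) :
    factorOf x s t = (List.range (t - s + 1).toNat).map fun i : ℕ => x (s + (i : ℤ)) := by
  have h : ∀ l : List ℕ, (do let a ← l; pure (a : ℤ) : List ℤ) = l.map Nat.cast := fun l => by
    induction l with
    | nil => rfl
    | cons a l ih => simpa using ih
  unfold factorOf
  rw [h, List.map_map]
  rfl

theorem length_factorOf (x : ℤ → A) (s t : ℤ) : (factorOf x s t).length = (t - s + 1).toNat := by
  simp [factorOf_eq]

theorem map_factorOf {B : Type*} (f : B → A) (y : ℤ → B) (s t : ℤ) :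
    (factorOf y s t).map f = factorOf (fun i => f (y i)) s t := by
  simp [factorOf_eq, Function.comp_def]

theorem factorOf_shift (x : ℤ → A) (k s t : ℤ) :
    factorOf (fun i => x (i + k)) s t = factorOf x (s + k) (t + k) := by
  simp only [factorOf_eq]
  rw [show t + k - (s + k) + 1 = t - s + 1 by ring]
  refine List.map_congr_left fun i _ => ?_
  rw [show s + (i : ℤ) + k = s + k + i by ring]

theorem factorOf_append (x : ℤ → A) {s t u : ℤ} (h : s ≤ t) (h' : t ≤ u + 1) :
    factorOf x s (t - 1) ++ factorOf x t u = factorOf x s u := by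
  refine List.ext_getElem (by simp [factorOf_eq]; omega) fun i h1 h2 => ?_
  rw [List.getElem_append]
  simp only [factorOf_eq, List.getElem_map, List.getElem_range, List.length_map, List.length_range]
  split
  · rfl
  · congr 1
    omega

theorem factorOf_infix (x : ℤ → A) {s t s' t' : ℤ} (h : s ≤ s') (h0 : s' ≤ t') (h' : t' ≤ t) :
    factorOf x s' t' <:+: factorOf x s t := by
  refine ⟨factorOf x s (s' - 1), factorOf x (t' + 1) t, ?_⟩
  rw [factorOf_append x h (by omega)]
  have := factorOf_append x (s := s) (t := t' + 1) (u := t) (by omega) (by omega)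
  rwa [add_sub_cancel_right] at this

theorem factorOf_mem {L : Set (List A)} (hL : ∀ u w, u <:+: w → w ∈ L → u ∈ L) {x : ℤ → A}
    (h : ∀ n : ℕ, factorOf x (-n) n ∈ L) {s t : ℤ} (hst : s ≤ t) : factorOf x s t ∈ L :=
  hL _ _ (factorOf_infix x (s := -((s.natAbs + t.natAbs : ℕ) : ℤ)) (t := (s.natAbs + t.natAbs : ℕ))
    (by omega) hst (by omega)) (h _)

theorem exists_shift_of_infix {x y : ℤ → A} {s t s' t' : ℤ}
    (h : factorOf y s t <:+: factorOf x s' t') :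
    ∃ k, ∀ i, s ≤ i → i ≤ t → y i = x (i + k) := by
  obtain ⟨p, q, e⟩ := h
  refine ⟨s' + p.length - s, fun i h1 h2 => ?_⟩
  obtain ⟨j, rfl⟩ : ∃ j : ℕ, i = s + j := ⟨(i - s).toNat, by omega⟩
  have hl := congrArg List.length e
  simp only [List.length_append, length_factorOf] at hl
  have h3 := congrArg (fun l => l[p.length + j]?) e
  rw [List.append_assoc, List.getElem?_append_right (by omega), Nat.add_sub_cancel_left,
    List.getElem?_append_left (by rw [length_factorOf]; omega)] at h3
  rw [factorOf_eq, factorOf_eq, List.getElem?_map, List.getElem?_map, List.getElem?_range (by omega),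
    List.getElem?_range (by omega)] at h3
  simp only [Option.map_some, Option.some.injEq] at h3
  rw [h3]
  congr 1
  push_cast
  ring

theorem isClosed_factorOf_mem [TopologicalSpace A] [DiscreteTopology A] (L : Set (List A))
    (s t : ℤ) : IsClosed {x : ℤ → A | factorOf x s t ∈ L} := by
  have hc : Continuous fun (x : ℤ → A) (i : Fin (t - s + 1).toNat) => x (s + (i : ℕ)) := by
    fun_prop
  have := (isClosed_discrete {f : Fin (t - s + 1).toNat → A | List.ofFn f ∈ L}).preimage hc
  convert this using 1
  ext x
  have : factorOf x s t = List.ofFn fun i : Fin (t - s + 1).toNat => x (s + (i : ℕ)) :=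
    List.ext_getElem (by simp [factorOf_eq]) fun i h1 h2 => by simp [factorOf_eq]
  change factorOf x s t ∈ L ↔ _ ∈ L
  rw [this]

theorem isClosed_XSub [TopologicalSpace A] [DiscreteTopology A] : IsClosed (XSub σ) := by
  have : XSub σ = ⋂ (s : ℤ) (t : ℤ) (_ : s ≤ t), {x : ℤ → A | factorOf x s t ∈ lang σ} := by
    ext x
    simp only [Set.mem_iInter]
    rfl
  rw [this]
  exact isClosed_iInter fun s => isClosed_iInter fun t => isClosed_iInter fun _ =>
    isClosed_factorOf_mem _ _ _

/-- Compactness: a factor-closed set of words of unbounded length over a finite alphabet contains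
all factors of some bi-infinite sequence. -/
theorem exists_seq [Finite A] {L : Set (List A)} (hL : ∀ u w, u <:+: w → w ∈ L → u ∈ L)
    (hlong : ∀ n : ℕ, ∃ w ∈ L, n ≤ w.length) :
    ∃ x : ℤ → A, ∀ s t : ℤ, s ≤ t → factorOf x s t ∈ L := by
  let _ : TopologicalSpace A := ⊥
  have _ : DiscreteTopology A := ⟨rfl⟩
  have hne : Nonempty A := by
    obtain ⟨w, -, hw⟩ := hlong 1
    exact ⟨w[0]⟩
  let C : ℕ → Set (ℤ → A) := fun n => {x | factorOf x (-n) n ∈ L}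
  obtain ⟨x, hx⟩ : (⋂ n, C n).Nonempty := by
    refine IsCompact.nonempty_iInter_of_sequence_nonempty_isCompact_isClosed C (fun n x hx => ?_)
      (fun n => ?_) (isClosed_factorOf_mem _ _ _).isCompact fun n => isClosed_factorOf_mem _ _ _
    · exact hL _ _ (factorOf_infix x (by push_cast; omega) (by omega) (by push_cast; omega)) hx
    · obtain ⟨w, hw, hl⟩ := hlong (2 * n + 1)
      refine ⟨fun i => w.getD (i + n).toNat (Classical.arbitrary A), ?_⟩
      suffices e : factorOf (fun i : ℤ => w.getD (i + n).toNat (Classical.arbitrary A)) (-n) n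
          = w.take (2 * n + 1) by
        change factorOf _ _ _ ∈ L
        rw [e]
        exact hL _ _ (List.take_prefix (2 * n + 1) w).isInfix hw
      refine List.ext_getElem (by simp [factorOf_eq]; omega) fun i h1 h2 => ?_
      rw [List.length_take] at h2
      simp only [factorOf_eq, List.getElem_map, List.getElem_range, List.getElem_take]
      rw [show (-(n : ℤ) + i + n).toNat = i by omega]
      exact List.getD_eq_getElem _ _ (by omega)
  exact ⟨x, fun s t hst => factorOf_mem hL (fun n => Set.mem_iInter.1 hx n) hst⟩

theorem XSub_nonempty [Finite A] (h : (longLetters σ).Nonempty) : (XSub σ).Nonempty := by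
  obtain ⟨a, ha⟩ := h
  refine exists_seq (L := lang σ) (fun u w h hw => lang_infix h hw) fun n => ?_
  obtain ⟨m, hm, h1⟩ := ((Filter.tendsto_atTop.1 ha n).and (Filter.eventually_ge_atTop 1)).exists
  exact ⟨_, ⟨a, m, h1, List.infix_rfl⟩, hm⟩

theorem XSub_shift {x : ℤ → A} (hx : x ∈ XSub σ) (k : ℤ) : (fun i => x (i + k)) ∈ XSub σ := by
  intro s t hst
  rw [factorOf_shift]
  exact hx _ _ (by omega)

theorem shift_image_eq {X : Set (ℤ → A)}
    (h : ∀ x ∈ X, ∀ k : ℤ, (fun i => x (i + k)) ∈ X) : shiftT '' X = X := by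
  ext x
  constructor
  · rintro ⟨y, hy, rfl⟩
    exact h y hy 1
  · intro hx
    refine ⟨_, h x hx (-1), ?_⟩
    funext i
    simp [shiftT]

theorem shift_mem {X : Set (ℤ → A)} (h : shiftT '' X = X) {x : ℤ → A} (hx : x ∈ X) (k : ℤ) :
    (fun i => x (i + k)) ∈ X := by
  induction k with
  | zero => simpa using hx
  | succ k ih =>
    rw [← h]
    refine ⟨_, ih, ?_⟩
    funext i
    simp only [shiftT]
    congr 1
    ring
  | pred k ih =>
    rw [← h] at ih
    obtain ⟨y, hy, e⟩ := ih
    convert hy using 1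
    funext i
    have := congrFun e (i - 1)
    simp only [shiftT, sub_add_cancel] at this
    rw [this]
    congr 1
    ring

/-- A nonempty set of sequences in which every central window of every element occurs in every
element is minimal. -/
theorem isMinimal_of_recurrent [TopologicalSpace A] [DiscreteTopology A] {X : Set (ℤ → A)}
    (hX : X.Nonempty) (h : ∀ x ∈ X, ∀ y ∈ X, ∀ m : ℕ, ∃ k : ℤ, ∀ i : ℤ, -m ≤ i → i ≤ m →
      y i = x (i + k)) : IsMinimalSubshift X := by
  refine ⟨hX, fun Y hYX hY hc hs => hYX.antisymm fun y hy => ?_⟩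
  obtain ⟨x, hx⟩ := hY
  by_contra hyY
  obtain ⟨I, u, hu, hsub⟩ := isOpen_pi_iff.1 hc.isOpen_compl y hyY
  obtain ⟨k, hk⟩ := h x (hYX hx) y hy (I.sup Int.natAbs)
  refine hsub ?_ (shift_mem hs hx k)
  intro i hi
  have h1 : i.natAbs ≤ I.sup Int.natAbs := Finset.le_sup (f := Int.natAbs) hi
  simp only
  rw [← hk i (by omega) (by omega)]
  exact (hu i hi).2

end Factors

/-! ### Recurrence for `l`-primitive tame substitutions -/

section Recurrence

variable {A : Type*} {σ : A → List A}

theorem prefix_flatMap_decomp {g : A → List A} {M : ℕ} (hM : ∀ a, (g a).length ≤ M) (w : List A)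
    {z : List A} (h : z <+: w.flatMap g) :
    ∃ q p, q <+: w ∧ z = q.flatMap g ++ p ∧ p.length ≤ M := by
  induction w generalizing z with
  | nil => exact ⟨[], z, List.prefix_rfl, rfl, by simp at h; simp [h]⟩
  | cons a w ih =>
    obtain ⟨t, e⟩ := h
    rw [List.flatMap_cons] at e
    rcases List.append_eq_append_iff.1 e with ⟨l, h1, -⟩ | ⟨l, rfl, h2⟩
    · refine ⟨[], z, List.nil_prefix, rfl, ?_⟩
      have := hM a
      rw [h1, List.length_append] at this
      omega
    · obtain ⟨q, p, hq, rfl, hp⟩ := ih ⟨t, h2.symm⟩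
      exact ⟨a :: q, p, by simpa using hq, by simp, hp⟩

theorem infix_flatMap_decomp {g : A → List A} {M : ℕ} (hM : ∀ a, (g a).length ≤ M) (w : List A)
    {z : List A} (h : z <:+: w.flatMap g) :
    ∃ q s p, q <:+: w ∧ z = s ++ q.flatMap g ++ p ∧ s.length ≤ M ∧ p.length ≤ M := by
  induction w with
  | nil => exact ⟨[], [], z, List.infix_rfl, rfl, by simp, by simp at h; simp [h]⟩
  | cons a w ih =>
    rw [List.flatMap_cons, List.infix_append_iff] at h
    rcases h with h | h | ⟨x, y, rfl, hx, hy⟩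
    · exact ⟨[], z, [], List.nil_infix, by simp, h.length_le.trans (hM a), by simp⟩
    · obtain ⟨q, s, p, hq, e⟩ := ih h
      exact ⟨q, s, p, hq.trans (List.suffix_cons a w).isInfix, e⟩
    · obtain ⟨q, p, hq, rfl, hp⟩ := prefix_flatMap_decomp hM w hy
      exact ⟨q, x, p, hq.isInfix.trans (List.suffix_cons a w).isInfix, by simp,
        hx.length_le.trans (hM a), hp⟩

theorem exists_short_bound [Finite A] (hσ : ∀ a, σ a ≠ []) :
    ∃ K, ∀ a ∈ shortLetters σ, ∀ n, (substIter σ n [a]).length ≤ K := by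
  have : ∀ a, ∃ C, a ∈ shortLetters σ → ∀ n, (substIter σ n [a]).length ≤ C := fun a => by
    by_cases ha : a ∈ shortLetters σ
    · exact ((mem_shortLetters_iff hσ).1 ha).imp fun C h _ => h
    · exact ⟨0, fun h => absurd h ha⟩
  choose C hC using this
  obtain ⟨K, hK⟩ := exists_bound_of_finite C
  exact ⟨K, fun a ha n => (hC a ha n).trans (hK a)⟩

/-- In an `l`-primitive tame substitution every window of a point of `X_σ` lies in `σᵗ(b)` for all
long letters `b` and a common `t`; as the runs of short letters are bounded, every long enough
factor of a point of `X_σ` contains such a `σᵗ(b)`. -/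
theorem recurrent_of_tame [Finite A] (hσ : ∀ a, σ a ≠ []) (hp : LPrimitive σ) (ht : Tame σ)
    {x y : ℤ → A} (hx : x ∈ XSub σ) (hy : y ∈ XSub σ) (m : ℕ) :
    ∃ k : ℤ, ∀ i : ℤ, -m ≤ i → i ≤ m → y i = x (i + k) := by
  obtain ⟨K, hK⟩ := exists_short_bound hσ
  -- A factor longer than every `σⁿ(b)` with `b` short can only come from a long letter.
  obtain ⟨a, n, -, hw⟩ := hy (-(m + K : ℕ)) (m + K : ℕ) (by omega)
  have ha : a ∈ longLetters σ := by
    rw [← not_mem_shortLetters]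
    intro ha
    have h1 := hw.length_le
    have h2 := hK a ha n
    rw [length_factorOf] at h1
    omega
  obtain ⟨N, -, hN⟩ := hp
  have hwb : ∀ b ∈ longLetters σ,
      factorOf y (-(m + K : ℕ)) (m + K : ℕ) <:+: substIter σ (n + N) [b] := fun b hb => by
    rw [substIter_add]
    exact hw.trans (substIter_infix n ((List.singleton_infix_iff _ _).2 (hN a ha b hb)))
  obtain ⟨R, hR⟩ := exists_run_bound hσ ht
  obtain ⟨M, hM⟩ := exists_bound_of_finite fun a => (substIter σ (n + N) [a]).length
  obtain ⟨c, r, -, hz⟩ := hx 0 (2 * M + R * M : ℕ) (by omega)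
  have hzl := length_factorOf x 0 (2 * M + R * M : ℕ)
  have hr : n + N ≤ r := by
    by_contra! hlt
    have h1 := hz.length_le
    have h2 := length_substIter_mono hσ [c] hlt.le
    have h3 := hM c
    simp only at h2
    omega
  obtain ⟨r, rfl⟩ := Nat.exists_eq_add_of_le hr
  have hz' := hz
  rw [substIter_add, substIter_eq_flatMap] at hz'
  obtain ⟨q, s, p, hq, e, hs, hp⟩ := infix_flatMap_decomp hM _ hz'
  have hql : R < q.length := by
    have h1 := congrArg List.length e
    have h2 := length_prefix_flatMap_le (g := fun a => substIter σ (n + N) [a])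
      (p := fun _ => True) (fun a u h _ => h.length_le.trans (hM a)) q List.prefix_rfl
      fun _ _ => trivial
    rw [List.length_append, List.length_append] at h1
    by_contra! hle
    have h3 : q.length * M ≤ R * M := Nat.mul_le_mul_right _ hle
    omega
  obtain ⟨b, hbq, hb⟩ : ∃ b ∈ q, b ∈ longLetters σ := by
    by_contra! hc
    have := hR c r q hq hc
    omega
  have hbz : substIter σ (n + N) [b] <:+: factorOf x 0 (2 * M + R * M : ℕ) := by
    rw [e]
    have h1 : substIter σ (n + N) [b] <:+: q.flatMap fun a => substIter σ (n + N) [a] := by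
      rw [← substIter_eq_flatMap]
      exact substIter_infix _ ((List.singleton_infix_iff _ _).2 hbq)
    exact h1.trans ⟨s, p, rfl⟩
  obtain ⟨k, hk⟩ := exists_shift_of_infix ((hwb b hb).trans hbz)
  exact ⟨k, fun i h1 h2 => hk i (by push_cast; omega) (by push_cast; omega)⟩

end Recurrence

/-! ### Isolated letters and powers in the language -/

section Periodic

variable {A : Type*} {σ : A → List A}

theorem substIter_replicate_flatten (n k : ℕ) (v : List A) :
    substIter σ n (List.replicate k v).flatten = (List.replicate k (substIter σ n v)).flatten := by
  induction k with
  | zero => simp [substIter_nil]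
  | succ k ih => simp [List.replicate_succ, substIter_append, ih]

/-- Some power `σʳ` is idempotent on words of short letters, because `σⁿ` restricted to the short
letters takes only finitely many values. -/
theorem exists_idempotent_power [Finite A] (hσ : ∀ a, σ a ≠ []) :
    ∃ r, 1 ≤ r ∧ ∀ u : List A, (∀ b ∈ u, b ∈ shortLetters σ) →
      substIter σ r (substIter σ r u) = substIter σ r u := by
  obtain ⟨K, hK⟩ := exists_short_bound hσ
  have : Finite {l : List A | l.length ≤ K} := (List.finite_length_le A K).to_subtype
  let f : ℕ → shortLetters σ → {l : List A | l.length ≤ K} :=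
    fun n b => ⟨substIter σ n [b.1], hK b.1 b.2 n⟩
  obtain ⟨i, j, hij, e⟩ : ∃ i j, i < j ∧ f i = f j := by
    obtain ⟨i, j, hne, h⟩ := Finite.exists_ne_map_eq_of_infinite f
    rcases lt_or_gt_of_ne hne with h' | h'
    · exact ⟨i, j, h', h⟩
    · exact ⟨j, i, h', h.symm⟩
  obtain ⟨q, rfl⟩ := Nat.exists_eq_add_of_le' hij.le
  have hq : 1 ≤ q := by omega
  have h1 : ∀ u : List A, (∀ b ∈ u, b ∈ shortLetters σ) →
      substIter σ (q + i) u = substIter σ i u := fun u hu => by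
    rw [substIter_eq_flatMap, substIter_eq_flatMap i]
    exact List.flatMap_congr fun b hb => (congrArg Subtype.val (congrFun e ⟨b, hu b hb⟩)).symm
  have h2 : ∀ u : List A, (∀ b ∈ u, b ∈ shortLetters σ) → ∀ m k,
      substIter σ (q * k + (m + i)) u = substIter σ (m + i) u := fun u hu m k => by
    induction k with
    | zero => simp
    | succ k ih =>
      rw [show q * (k + 1) + (m + i) = (q * k + m) + (q + i) by ring, substIter_add, h1 u hu,
        ← substIter_add, add_assoc, ih]
  have h3 : i ≤ q * (i + 1) := (Nat.le_succ i).trans (Nat.le_mul_of_pos_left _ hq)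
  obtain ⟨m, hm⟩ := Nat.exists_eq_add_of_le' h3
  refine ⟨q * (i + 1), by nlinarith, fun u hu => ?_⟩
  rw [← substIter_add]
  have := h2 u hu m (i + 1)
  rwa [← hm] at this

/-- A left isolated letter forces arbitrarily high powers of one word into the language: if
`h(a) = u a w` with `h` a power of `σ` idempotent on short words and `v = h(u)`, then `hᵏ⁺¹(a)`
begins with `vᵏ u a`. -/
theorem powers_of_leftIsolated [Finite A] (hσ : ∀ a, σ a ≠ []) {a : A} (h : LeftIsolated σ a) :
    ∃ v : List A, v ≠ [] ∧ ∀ k, (List.replicate k v).flatten ∈ lang σ := by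
  obtain ⟨n, hn, u, w, hu, hs, e⟩ := h
  have hpow : ∀ m, ∃ u w, u ≠ [] ∧ (∀ b ∈ u, b ∈ shortLetters σ) ∧
      substIter σ (n * (m + 1)) [a] = u ++ a :: w := by
    intro m
    induction m with
    | zero => exact ⟨u, w, hu, hs, by simpa using e⟩
    | succ m ih =>
      obtain ⟨u', w', hu', hs', e'⟩ := ih
      refine ⟨substIter σ (n * (m + 1)) u ++ u', w' ++ substIter σ (n * (m + 1)) w, by simp [hu'],
        fun b hb => ?_, ?_⟩
      · rcases List.mem_append.1 hb with hb | hb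
        · exact short_of_mem_substIter hσ hs _ b hb
        · exact hs' b hb
      · rw [Nat.mul_succ n (m + 1), substIter_add, e, substIter_append, substIter_cons, e']
        simp
  obtain ⟨r, hr, hid⟩ := exists_idempotent_power hσ
  have hid' : ∀ u : List A, (∀ b ∈ u, b ∈ shortLetters σ) → ∀ k,
      substIter σ (r * (k + 1)) u = substIter σ r u := fun u hu k => by
    induction k with
    | zero => simp
    | succ k ih => rw [Nat.mul_succ, add_comm, substIter_add, ih, hid u hu]
  obtain ⟨m, rfl⟩ := Nat.exists_eq_add_of_le' hr
  obtain ⟨u, w, hu, hs, e⟩ := hpow m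
  obtain ⟨l, rfl⟩ := Nat.exists_eq_add_of_le' hn
  set H := (l + 1) * (m + 1) with hH
  have hv : substIter σ H (substIter σ H u) = substIter σ H u := by
    rw [← substIter_add, hH, mul_comm, ← mul_add, ← add_assoc, hid' u hs, hid' u hs]
  have hk : ∀ k, ∃ w, substIter σ (H * (k + 1)) [a] =
      (List.replicate k (substIter σ H u)).flatten ++ (u ++ a :: w) := by
    intro k
    induction k with
    | zero => exact ⟨w, by simpa using e⟩
    | succ k ih =>
      obtain ⟨w', e'⟩ := ih
      refine ⟨w ++ substIter σ H w', ?_⟩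
      rw [Nat.mul_succ, add_comm, substIter_add, e', substIter_append, substIter_append,
        substIter_cons, e, substIter_replicate_flatten, hv, List.replicate_succ']
      simp
  refine ⟨substIter σ H u, substIter_ne_nil hσ H hu, fun k => ?_⟩
  obtain ⟨w', e'⟩ := hk k
  exact ⟨a, H * (k + 1), Nat.mul_pos (Nat.mul_pos l.succ_pos m.succ_pos) k.succ_pos, [], _,
    by rw [e']; rfl⟩

theorem reverse_mem_lang {w : List A} (h : w ∈ lang fun a => (σ a).reverse) :
    w.reverse ∈ lang σ := by
  obtain ⟨a, n, hn, h⟩ := h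
  rw [substIter_reverse_singleton] at h
  exact ⟨a, n, hn, by simpa using List.reverse_infix.2 h⟩

theorem powers_of_not_tame [Finite A] (hσ : ∀ a, σ a ≠ []) (h : ¬ Tame σ) :
    ∃ v : List A, v ≠ [] ∧ ∀ k, (List.replicate k v).flatten ∈ lang σ := by
  simp only [Tame, not_forall] at h
  obtain ⟨a, -, h⟩ := h
  by_cases hl : LeftIsolated σ a
  · exact powers_of_leftIsolated hσ hl
  · have hr : RightIsolated σ a := by
      by_contra hr
      exact h ⟨hl, hr⟩
    obtain ⟨v, hv, hk⟩ := powers_of_leftIsolated (σ := fun a => (σ a).reverse)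
      (fun a => by simpa using hσ a) (rightIsolated_reverse hr)
    refine ⟨v.reverse, by simpa using hv, fun k => ?_⟩
    have := reverse_mem_lang (hk k)
    rwa [List.reverse_flatten, List.map_replicate, List.reverse_replicate] at this

end Periodic

/-! ### Minimal sets of long letters -/

section MinimalLetters

variable {A : Type*} {σ : A → List A}

/-- The long letters occurring in `σⁿ(a)` for some `a ∈ G`. -/
def longImage (σ : A → List A) (n : ℕ) (G : Set A) : Set A :=
  {b | b ∈ longLetters σ ∧ ∃ a ∈ G, b ∈ substIter σ n [a]}

theorem longImage_add (hσ : ∀ a, σ a ≠ []) (m n : ℕ) (G : Set A) :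
    longImage σ (m + n) G = longImage σ m (longImage σ n G) := by
  ext b
  constructor
  · rintro ⟨hb, a, ha, h⟩
    rw [substIter_add, mem_substIter] at h
    obtain ⟨c, hc, hbc⟩ := h
    refine ⟨hb, c, ⟨?_, a, ha, hc⟩, hbc⟩
    rw [← not_mem_shortLetters]
    intro hs
    exact short_of_mem_substIter hσ (u := [c]) (by simpa using hs) m b hbc hb
  · rintro ⟨hb, c, ⟨-, a, ha, hc⟩, hbc⟩
    exact ⟨hb, a, ha, by rw [substIter_add, mem_substIter]; exact ⟨c, hc, hbc⟩⟩

theorem longImage_mono (n : ℕ) {G H : Set A} (h : G ⊆ H) : longImage σ n G ⊆ longImage σ n H :=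
  fun _ ⟨hb, a, ha, hm⟩ => ⟨hb, a, h ha, hm⟩

theorem longImage_nonempty (hσ : ∀ a, σ a ≠ []) (n : ℕ) {G : Set A} (hG : G.Nonempty)
    (hl : G ⊆ longLetters σ) : (longImage σ n G).Nonempty := by
  obtain ⟨a, ha⟩ := hG
  obtain ⟨b, hb, hbl⟩ := exists_long_of_long hσ (hl ha) n
  exact ⟨b, hbl, a, ha, hb⟩

theorem longImage_mul_eq (hσ : ∀ a, σ a ≠ []) {p : ℕ} {F : Set A} (h : longImage σ p F = F)
    (hF : F ⊆ longLetters σ) (k : ℕ) : longImage σ (p * k) F = F := by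
  induction k with
  | zero =>
    ext b
    refine ⟨?_, fun hb => ⟨hF hb, b, hb, List.mem_singleton_self b⟩⟩
    rintro ⟨-, a, ha, hb⟩
    rw [List.mem_singleton.1 hb]
    exact ha
  | succ k ih => rw [Nat.mul_succ, longImage_add hσ, h, ih]

theorem exists_longImage_periodic [Finite A] (hσ : ∀ a, σ a ≠ []) (p : ℕ) (G : Set A) :
    ∃ k q, 1 ≤ q ∧ longImage σ (p * q) (longImage σ (p * k) G) = longImage σ (p * k) G := by
  obtain ⟨i, j, hij, e⟩ : ∃ i j, i < j ∧ longImage σ (p * i) G = longImage σ (p * j) G := by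
    obtain ⟨i, j, hne, h⟩ := Finite.exists_ne_map_eq_of_infinite fun k => longImage σ (p * k) G
    rcases lt_or_gt_of_ne hne with h' | h'
    · exact ⟨i, j, h', h⟩
    · exact ⟨j, i, h', h.symm⟩
  obtain ⟨q, rfl⟩ := Nat.exists_eq_add_of_le' hij.le
  refine ⟨i, q, by omega, ?_⟩
  rw [← longImage_add hσ, ← mul_add, ← e]

/-- An inclusion-minimal nonempty set `F` of long letters fixed by some `longImage σ p` works: for
`a ∈ F` the sets `longImage σ (p * k) {a}` are eventually periodic subsets of `F`, hence
eventually equal to `F`. -/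
theorem exists_primitive_power [Finite A] (hσ : IsSubstitution σ) :
    ∃ N, 1 ≤ N ∧ ∃ F : Set A, F.Nonempty ∧ F ⊆ longLetters σ ∧
      ∀ a ∈ F, longImage σ N {a} = F := by
  obtain ⟨hσ, hl⟩ := hσ
  let P : Set A → Prop := fun F => F.Nonempty ∧ F ⊆ longLetters σ ∧ ∃ p, 1 ≤ p ∧
    longImage σ p F = F
  have hP : ∃ F, P F := by
    obtain ⟨k, q, hq, e⟩ := exists_longImage_periodic hσ 1 (longLetters σ)
    exact ⟨_, longImage_nonempty hσ _ hl subset_rfl, fun _ h => h.1, 1 * q, by omega, e⟩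
  obtain ⟨F, ⟨hne, hF, p, hp, e⟩, hmin⟩ := exists_minimal_of_wellFoundedLT P hP
  have key : ∀ a, ∃ k, a ∈ F → longImage σ (p * k) {a} = F := by
    intro a
    by_cases ha : a ∈ F
    swap
    · exact ⟨0, fun h => absurd h ha⟩
    obtain ⟨k, q, hq, e'⟩ := exists_longImage_periodic hσ p {a}
    have hsub : longImage σ (p * k) {a} ⊆ F := by
      conv_rhs => rw [← longImage_mul_eq hσ e hF k]
      exact longImage_mono _ (Set.singleton_subset_iff.2 ha)
    refine ⟨k, fun _ => hsub.antisymm (hmin ⟨?_, fun _ h => h.1, p * q, ?_, e'⟩ hsub)⟩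
    · exact longImage_nonempty hσ _ (Set.singleton_nonempty a)
        (Set.singleton_subset_iff.2 (hF ha))
    · exact Nat.mul_pos hp hq
  choose k hk using key
  obtain ⟨K, hK⟩ := exists_bound_of_finite k
  refine ⟨p * (K + 1), Nat.mul_pos hp K.succ_pos, F, hne, hF, fun a ha => ?_⟩
  obtain ⟨d, hd⟩ := Nat.exists_eq_add_of_le' ((hK a).trans (Nat.le_succ K))
  rw [Nat.succ_eq_add_one] at hd
  rw [hd, mul_add, longImage_add hσ, hk a ha, longImage_mul_eq hσ e hF]

end MinimalLetters

/-! ### Substitutions on subalphabets -/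

section Subalphabets

variable {A : Type*} {σ : A → List A} {B : Set A} {τ : B → List B}

/-- The set of sequences over `A` that a substitution over `B ⊆ A` defines. -/
def liftXSub (τ : B → List B) : Set (ℤ → A) :=
  (fun (y : ℤ → B) (i : ℤ) => (y i : A)) '' XSub τ

theorem map_val_substIter (h : ∀ b : B, (τ b).map Subtype.val = σ b) (n : ℕ) (w : List B) :
    (substIter τ n w).map Subtype.val = substIter σ n (w.map Subtype.val) := by
  induction n generalizing w with
  | zero => rfl
  | succ n ih =>
    rw [substIter_succ, substIter_succ, ih]
    congr 1
    simp [substW, List.map_flatMap, h]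

theorem map_val_substIter_singleton (h : ∀ b : B, (τ b).map Subtype.val = σ b) (n : ℕ) (b : B) :
    (substIter τ n [b]).map Subtype.val = substIter σ n [b.1] :=
  map_val_substIter h n [b]

theorem mem_longLetters_val (h : ∀ b : B, (τ b).map Subtype.val = σ b) (b : B) :
    b ∈ longLetters τ ↔ b.1 ∈ longLetters σ :=
  longLetters_congr fun n => by rw [← map_val_substIter_singleton h, List.length_map]

theorem map_val_mem_lang (h : ∀ b : B, (τ b).map Subtype.val = σ b) {w : List B}
    (hw : w ∈ lang τ) : w.map Subtype.val ∈ lang σ := by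
  obtain ⟨b, n, hn, hw⟩ := hw
  exact ⟨b, n, hn, by rw [← map_val_substIter_singleton h]; exact hw.map _⟩

theorem lang_pow_subset {N : ℕ} (hN : 1 ≤ N) : lang (fun a => substIter σ N [a]) ⊆ lang σ := by
  rintro w ⟨a, n, hn, hw⟩
  rw [substIter_pow] at hw
  exact ⟨a, N * n, Nat.mul_pos hN hn, hw⟩

theorem liftXSub_shift {x : ℤ → A} (hx : x ∈ liftXSub τ) (k : ℤ) :
    (fun i => x (i + k)) ∈ liftXSub τ := by
  obtain ⟨y, hy, rfl⟩ := hx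
  exact ⟨_, XSub_shift hy k, rfl⟩

theorem isClosed_liftXSub [Finite A] [TopologicalSpace A] [DiscreteTopology A] :
    IsClosed (liftXSub τ) := by
  have hc : Continuous fun (y : ℤ → B) (i : ℤ) => (y i : A) := by fun_prop
  exact (isClosed_XSub.isCompact.image hc).isClosed

theorem isMinimal_liftXSub [Finite A] [TopologicalSpace A] [DiscreteTopology A]
    (hτ : IsSubstitution τ) (hp : LPrimitive τ) (ht : Tame τ) :
    IsMinimalSubshift (liftXSub τ) := by
  refine isMinimal_of_recurrent ((XSub_nonempty hτ.2).image _) ?_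
  rintro _ ⟨x, hx, rfl⟩ _ ⟨y, hy, rfl⟩ m
  obtain ⟨k, hk⟩ := recurrent_of_tame hτ.1 hp ht hx hy m
  exact ⟨k, fun i h1 h2 => congrArg Subtype.val (hk i h1 h2)⟩

theorem eq_of_isMinimal [TopologicalSpace A] [DiscreteTopology A] {X Y : Set (ℤ → A)}
    (hX : IsMinimalSubshift X) (hY : IsMinimalSubshift Y) (hXc : IsClosed X) (hYc : IsClosed Y)
    (hXs : ∀ x ∈ X, ∀ k : ℤ, (fun i => x (i + k)) ∈ X)
    (hYs : ∀ x ∈ Y, ∀ k : ℤ, (fun i => x (i + k)) ∈ Y) (h : (X ∩ Y).Nonempty) : X = Y := by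
  have hs : shiftT '' (X ∩ Y) = X ∩ Y :=
    shift_image_eq fun x hx k => ⟨hXs x hx.1 k, hYs x hx.2 k⟩
  exact (hX.2 _ Set.inter_subset_left h (hXc.inter hYc) hs).symm.trans
    (hY.2 _ Set.inter_subset_right h (hXc.inter hYc) hs)

/-- Extending a substitution on `B` by `a ↦ a` outside `B` does not change the sequences it
defines: a letter outside `B` occurs in no word of length two of the language. -/
theorem exists_extension (hτ : IsSubstitution τ) :
    ∃ σ : A → List A, IsSubstitution σ ∧ liftXSub τ = XSub σ := by
  classical
  let σ : A → List A := fun a => if h : a ∈ B then (τ ⟨a, h⟩).map Subtype.val else [a]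
  have h : ∀ b : B, (τ b).map Subtype.val = σ b := fun b => by simp [σ]
  have hout : ∀ a ∉ B, ∀ n, substIter σ n [a] = [a] := fun a ha n => by
    induction n with
    | zero => rfl
    | succ n ih =>
      have : substW σ [a] = [a] := by simp [substW, σ, ha]
      rw [substIter_succ, this, ih]
  refine ⟨σ, ⟨fun a => ?_, ?_⟩, ?_⟩
  · by_cases ha : a ∈ B
    · rw [← h ⟨a, ha⟩]
      exact fun e => hτ.1 ⟨a, ha⟩ (List.map_eq_nil_iff.1 e)
    · simp [σ, ha]
  · obtain ⟨b, hb⟩ := hτ.2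
    exact ⟨b, (mem_longLetters_val h b).1 hb⟩
  ext x
  constructor
  · rintro ⟨y, hy, rfl⟩ s t hst
    rw [← map_factorOf Subtype.val y]
    exact map_val_mem_lang h (hy s t hst)
  · intro hx
    have hxB : ∀ i, x i ∈ B := fun i => by
      obtain ⟨a, n, -, hi⟩ := hx i (i + 1) (by omega)
      by_cases ha : a ∈ B
      · rw [← map_val_substIter_singleton h n ⟨a, ha⟩] at hi
        have hm : x i ∈ factorOf x i (i + 1) := by
          rw [factorOf_eq, List.mem_map]
          exact ⟨0, by simp, by simp⟩
        obtain ⟨b, -, hb⟩ := List.mem_map.1 (hi.mem hm)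
        rw [← hb]
        exact b.2
      · rw [hout a ha] at hi
        have := hi.length_le
        rw [length_factorOf, List.length_singleton] at this
        omega
    refine ⟨fun i => ⟨x i, hxB i⟩, fun s t hst => ?_, rfl⟩
    have e := map_factorOf Subtype.val (fun i => (⟨x i, hxB i⟩ : B)) s t
    obtain ⟨a, n, hn, hi⟩ := hx s t hst
    by_cases ha : a ∈ B
    · rw [← map_val_substIter_singleton h n ⟨a, ha⟩, List.infix_map_iff] at hi
      obtain ⟨l, hl, hl'⟩ := hi
      refine ⟨⟨a, ha⟩, n, hn, ?_⟩
      rwa [List.map_injective_iff.2 Subtype.val_injective (e.trans hl')]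
    · rw [hout a ha] at hi
      have hm : x s ∈ factorOf x s t := by
        rw [factorOf_eq, List.mem_map]
        exact ⟨0, by simp; omega, by simp⟩
      exact absurd (List.mem_singleton.1 (hi.mem hm) ▸ hxB s) ha

theorem map_replicate_flatten (k : ℕ) (v : List B) :
    (List.replicate k v).flatten.map Subtype.val =
      (List.replicate k (v.map Subtype.val)).flatten := by
  rw [List.map_flatten, List.map_replicate]

/-- If `X_σ` is minimal and its language contains all powers of a word `v`, then `X_σ` is the orbit
of `v^∞`, and the constant substitution `b ↦ v v` on the letters of `v` defines it. -/
theorem exists_of_powers [Finite A] [TopologicalSpace A] [DiscreteTopology A]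
    (hmin : IsMinimalSubshift (XSub σ)) {v : List A} (hv : v ≠ [])
    (hk : ∀ k, (List.replicate k v).flatten ∈ lang σ) :
    ∃ (B : Set A) (τ : B → List B), IsSubstitution τ ∧ LPrimitive τ ∧ Tame τ ∧
      XSub σ = liftXSub τ := by
  let B : Set A := {a | a ∈ v}
  let v' : List B := v.attachWith (· ∈ B) fun _ h => h
  have hv' : v'.map Subtype.val = v := List.attachWith_map_subtype_val _
  have hpos : 1 ≤ v'.length := by
    rw [← List.length_map (f := Subtype.val), hv']
    exact List.length_pos_iff.2 hv
  have hmem : ∀ b : B, b ∈ v' := fun b => (List.mem_attachWith _ b).2 b.2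
  let τ : B → List B := fun _ => v' ++ v'
  have hconst : ∀ w : List B, substW τ w = (List.replicate (2 * w.length) v').flatten := fun w => by
    induction w with
    | nil => rfl
    | cons b w ih =>
      rw [List.length_cons, show 2 * (w.length + 1) = 2 * w.length + 1 + 1 by ring,
        List.replicate_succ, List.replicate_succ, List.flatten_cons, List.flatten_cons, ← ih]
      simp [substW, τ]
  have hsucc : ∀ n b, substIter τ (n + 1) [b] =
      (List.replicate (2 * (substIter τ n [b]).length) v').flatten := fun n b => by
    rw [add_comm, substIter_add, ← hconst]
    rfl
  have hlen : ∀ n b, n ≤ (substIter τ n [b]).length := fun n b => by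
    induction n with
    | zero => exact Nat.zero_le _
    | succ n ih =>
      have h1 : 1 ≤ (substIter τ n [b]).length := by
        have := length_le_length_substIter (σ := τ) (fun _ => by
          have := List.length_pos_iff.1 hpos
          simpa [τ] using this) n [b]
        simpa using this
      rw [hsucc, List.length_flatten, List.map_replicate, List.sum_replicate, smul_eq_mul]
      calc n + 1 ≤ 2 * (substIter τ n [b]).length * 1 := by omega
        _ ≤ _ := Nat.mul_le_mul_left _ hpos
  have hlong : ∀ b, b ∈ longLetters τ := fun b =>
    Filter.tendsto_atTop_mono (fun n => hlen n b) Filter.tendsto_id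
  obtain ⟨a, ha⟩ := List.exists_mem_of_ne_nil v hv
  have hsub : IsSubstitution τ :=
    ⟨fun _ => by simpa [τ] using List.length_pos_iff.1 hpos, ⟨⟨a, ha⟩, hlong _⟩⟩
  have hprim : LPrimitive τ := by
    refine ⟨1, le_rfl, fun a _ b _ => ?_⟩
    have : substIter τ 1 [b] = v' ++ v' := by
      change substW τ [b] = _
      simp [substW, τ]
    rw [this]
    exact List.mem_append_left _ (hmem a)
  have htame : Tame τ := by
    refine fun b _ => ⟨?_, ?_⟩ <;>
    · rintro ⟨n, -, u, w, hu, hs, -⟩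
      obtain ⟨c, hc⟩ := List.exists_mem_of_ne_nil u hu
      exact hs c hc (hlong c)
  refine ⟨B, τ, hsub, hprim, htame, ?_⟩
  obtain ⟨y, hy⟩ := exists_seq (L := {w : List B | ∃ k, w <:+: (List.replicate k v').flatten})
    (fun u w h ⟨k, hk⟩ => ⟨k, h.trans hk⟩) fun n => ⟨_, ⟨n, List.infix_rfl⟩, by
      rw [List.length_flatten, List.map_replicate, List.sum_replicate, smul_eq_mul]
      exact Nat.le_mul_of_pos_right n hpos⟩
  refine eq_of_isMinimal hmin (isMinimal_liftXSub hsub hprim htame) isClosed_XSub isClosed_liftXSub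
    (fun x hx => XSub_shift hx) (fun x hx => liftXSub_shift hx) ⟨fun i => y i, ?_, y, ?_, rfl⟩
  · intro s t hst
    obtain ⟨k, hi⟩ := hy s t hst
    have h1 := hi.map Subtype.val
    rw [map_factorOf, map_replicate_flatten, hv'] at h1
    exact lang_infix h1 (hk k)
  · intro s t hst
    obtain ⟨k, hi⟩ := hy s t hst
    refine ⟨⟨a, ha⟩, k + 1, by omega, hi.trans ?_⟩
    rw [hsucc]
    obtain ⟨d, hd⟩ := Nat.exists_eq_add_of_le (show k ≤ 2 * (substIter τ k [⟨a, ha⟩]).length from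
      (hlen k _).trans (Nat.le_mul_of_pos_left _ two_pos))
    rw [hd, List.replicate_add, List.flatten_append]
    exact (List.prefix_append _ _).isInfix

/-- For `σ` with `X_σ` minimal, a power of `σ` restricted to a minimal set of long letters together
with all short letters is `l`-primitive and defines a nonempty subsystem, hence all of `X_σ`. If
this restriction is not tame, then `X_σ` is a periodic orbit. -/
theorem exists_primitive_tame [Finite A] [TopologicalSpace A] [DiscreteTopology A]
    (hσ : IsSubstitution σ) (hmin : IsMinimalSubshift (XSub σ)) :
    ∃ (B : Set A) (τ : B → List B), IsSubstitution τ ∧ LPrimitive τ ∧ Tame τ ∧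
      XSub σ = liftXSub τ := by
  obtain ⟨N, hN, F, hne, hF, hFN⟩ := exists_primitive_power hσ
  let ρ : A → List A := fun a => substIter σ N [a]
  let B : Set A := F ∪ shortLetters σ
  have hB : ∀ b : B, ∀ c ∈ ρ b, c ∈ B := by
    rintro ⟨b, hb⟩ c hc
    by_cases hcl : c ∈ longLetters σ
    · rcases hb with hb | hb
      · left
        rw [← hFN b hb]
        exact ⟨hcl, b, rfl, hc⟩
      · exact absurd hcl (short_of_mem_substIter hσ.1 (u := [b]) (by simpa using hb) N c hc)
    · exact Or.inr hcl
  let τ : B → List B := fun b => (ρ b).attachWith (· ∈ B) (hB b)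
  have h : ∀ b : B, (τ b).map Subtype.val = ρ b := fun b => List.attachWith_map_subtype_val _
  have hτ : ∀ b, τ b ≠ [] := fun b hb => by
    have := h b
    rw [hb] at this
    exact substIter_ne_nil hσ.1 N (List.cons_ne_nil b.1 []) this.symm
  have hlong : ∀ b : B, b ∈ longLetters τ ↔ b.1 ∈ F := fun b => by
    rw [mem_longLetters_val h, longLetters_pow hσ.1 hN]
    exact ⟨fun hb => b.2.resolve_right fun hs => hs hb, fun hb => hF hb⟩
  have hsub : IsSubstitution τ := by
    obtain ⟨a, ha⟩ := hne
    exact ⟨hτ, ⟨⟨a, Or.inl ha⟩, (hlong _).2 ha⟩⟩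
  have hprim : LPrimitive τ := by
    refine ⟨1, le_rfl, fun a ha b hb => ?_⟩
    rw [hlong] at ha hb
    rw [← hFN b hb] at ha
    obtain ⟨-, c, rfl, hc⟩ := ha
    have e : (substIter τ 1 [b]).map Subtype.val = substIter σ N [b.1] := by
      rw [map_val_substIter_singleton h, substIter_pow, mul_one]
    rw [← e] at hc
    exact (List.mem_map_of_injective Subtype.val_injective).1 hc
  have hlang : ∀ w ∈ lang τ, w.map Subtype.val ∈ lang σ := fun w hw =>
    lang_pow_subset hN (map_val_mem_lang h hw)
  by_cases ht : Tame τ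
  · refine ⟨B, τ, hsub, hprim, ht, (hmin.2 _ ?_ ((XSub_nonempty hsub.2).image _) isClosed_liftXSub
      (shift_image_eq fun x hx => liftXSub_shift hx)).symm⟩
    rintro _ ⟨y, hy, rfl⟩ s t hst
    rw [← map_factorOf Subtype.val y]
    exact hlang _ (hy s t hst)
  · obtain ⟨v, hv, hk⟩ := powers_of_not_tame hτ ht
    refine exists_of_powers hmin (v := v.map Subtype.val) (fun e => hv (List.map_eq_nil_iff.1 e))
      fun k => ?_
    rw [← map_replicate_flatten]
    exact hlang _ (hk k)

end Subalphabets

end SubstMin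

/-- A subshift is a minimal substitution dynamical system iff it is the
substitution dynamical system of some `l`-primitive tame substitution (on a
subalphabet). -/
theorem statement2 {A : Type*} [Fintype A] [TopologicalSpace A] [DiscreteTopology A]
    (X : Set (ℤ → A)) :
    (∃ σ : A → List A, SubstMin.IsSubstitution σ ∧ X = SubstMin.XSub σ ∧
        SubstMin.IsMinimalSubshift X) ↔
    (∃ (B : Set A) (τ : B → List B), SubstMin.IsSubstitution τ ∧
        SubstMin.LPrimitive τ ∧ SubstMin.Tame τ ∧
        X = (fun (y : ℤ → B) (i : ℤ) => (y i : A)) '' SubstMin.XSub τ) := by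
  constructor
  · rintro ⟨σ, hσ, rfl, hmin⟩
    exact SubstMin.exists_primitive_tame hσ hmin
  · rintro ⟨B, τ, hτ, hp, ht, rfl⟩
    obtain ⟨σ, hσ, e⟩ := SubstMin.exists_extension hτ
    exact ⟨σ, hσ, e, SubstMin.isMinimal_liftXSub hτ hp ht⟩
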